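/- Let $A\in\mathbb{R}^{m\times m}$ be positive semidefinite of rank $r_A$ with compact eigendecomposition $A=Q\Sigma Q^\top$, where $Q\in\mathbb{R}^{m\times r_A}$ satisfies $Q^\top Q=I$ and $\Sigma$ is diagonal with diagonal entries $\sigma_1(A)\ge\dots\ge\sigma_{r_A}(A)>0$, and let $A^\dagger=Q\Sigma^{-1}Q^\top$. Suppose $1\le r<r_A$ and $0<\eta\le 1$, let $X_0=A\Omega$ for a matrix $\Omega\in\mathbb{R}^{m\times r}$ with $\operatorname{rank}(X_0)=r$, and let $$X_{t+1}=X_t-\eta\,(X_tX_t^\top-A)X_t(X_t^\top X_t)^{-1},\qquad t\ge 0,$$ be the ScaledGD iterates. Put $B_t=X_t^\top A^\dagger X_t$, and let $\lambda_{\min}$ denote the smallest eigenvalue of a symmetric matrix. Then for every $t\ge 0$ the matrix $X_t^\top X_t$ is invertible (so that the iterates are well defined), and $$\lambda_{\min}(B_{t+1})\ \ge\ (1-\eta)-(1-\eta)^{2t+3}+(1-\eta)^{2t+2}\,\lambda_{\min}(B_0).$$ -/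

import Mathlib

open Matrix

/-- The smallest eigenvalue of a real symmetric matrix: the least element of its (finite)
set of eigenvalues. -/
noncomputable def lamMin {n : ℕ} (M : Matrix (Fin n) (Fin n) ℝ) : ℝ :=
  sInf (spectrum ℝ M)

/-- For a symmetric matrix of positive size, `lamMin` is attained: it is the least eigenvalue. -/
theorem lamMin_isLeast {n : ℕ} (hn : 0 < n) {M : Matrix (Fin n) (Fin n) ℝ}
    (hM : M.IsHermitian) : IsLeast (spectrum ℝ M) (lamMin M) := by
  have hfin : (spectrum ℝ M).Finite := by
    rw [hM.spectrum_real_eq_range_eigenvalues]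
    exact Set.finite_range _
  have hne : (spectrum ℝ M).Nonempty :=
    ⟨_, hM.eigenvalues_mem_spectrum_real ⟨0, hn⟩⟩
  exact ⟨hne.csInf_mem hfin, fun _ hx => csInf_le hfin.bddBelow hx⟩

/-- The ScaledGD iterates with step size `η` for the target `A`, started at `X₀`:
`X_{t+1} = X_t − η (X_t X_tᵀ − A) X_t (X_tᵀ X_t)⁻¹`. -/
noncomputable def scaledGD {m r : ℕ} (A : Matrix (Fin m) (Fin m) ℝ) (η : ℝ)
    (X₀ : Matrix (Fin m) (Fin r) ℝ) : ℕ → Matrix (Fin m) (Fin r) ℝ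
  | 0 => X₀
  | t + 1 =>
    scaledGD A η X₀ t -
      η • ((scaledGD A η X₀ t * (scaledGD A η X₀ t)ᵀ - A) * scaledGD A η X₀ t *
        ((scaledGD A η X₀ t)ᵀ * scaledGD A η X₀ t)⁻¹)

/-! With `W = X (Xᵀ X)⁻¹`, a ScaledGD step reads `Y = (1 - η) X + η A W`. If `P` inverts `A` on the
range of `A`, and the columns of `X` lie there, then `Xᵀ P A W = 1` and `(A W)ᵀ P (A W) = Wᵀ A W`,
so that
`Yᵀ P Y = (1 - η)² Xᵀ P X + 2η(1 - η) 1 + η² Wᵀ A W`.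
The last term is positive semidefinite, so `λ_min(Yᵀ P Y) ≥ (1 - η)² λ_min(Xᵀ P X) + 2η(1 - η)`.
Up to the nonnegative slack `η²(1 - η)` this reads
`λ_min(Yᵀ P Y) - (1 - η) ≥ (1 - η)² (λ_min(Xᵀ P X) - (1 - η))`, which iterates to the claim.
The rank is preserved because `Xᵀ P Y = (1 - η) Xᵀ P X + η 1` is positive definite. -/

section SmallestEigenvalue

open scoped MatrixOrder

theorem le_lamMin_iff {n : ℕ} (hn : 0 < n) {M : Matrix (Fin n) (Fin n) ℝ} (hM : M.IsHermitian)
    {c : ℝ} : c ≤ lamMin M ↔ c • 1 ≤ M := by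
  rw [← Algebra.algebraMap_eq_smul_one, algebraMap_le_iff_le_spectrum hM]
  exact le_isGLB_iff (lamMin_isLeast hn hM).isGLB

end SmallestEigenvalue

section Congruence

variable {m n R : Type*}

theorem isHermitian_transpose_mul_mul_same [Fintype m] [NonUnitalSemiring R] [StarRing R]
    [TrivialStar R] {S : Matrix m m R} (hS : S.IsHermitian) (Z : Matrix m n R) :
    (Zᵀ * S * Z).IsHermitian := by
  simpa only [conjTranspose_eq_transpose_of_trivial] using isHermitian_conjTranspose_mul_mul Z hS

theorem posSemidef_transpose_mul_mul_same [Fintype m] [Finite n] [Ring R] [PartialOrder R]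
    [StarRing R] [TrivialStar R] {S : Matrix m m R} (hS : S.PosSemidef) (Z : Matrix m n R) :
    (Zᵀ * S * Z).PosSemidef := by
  simpa only [conjTranspose_eq_transpose_of_trivial] using hS.conjTranspose_mul_mul_same Z

theorem posSemidef_mul_mul_transpose_same [Finite m] [Fintype n] [Ring R] [PartialOrder R]
    [StarRing R] [TrivialStar R] {S : Matrix n n R} (hS : S.PosSemidef) (Z : Matrix m n R) :
    (Z * S * Zᵀ).PosSemidef := by
  simpa only [conjTranspose_eq_transpose_of_trivial] using hS.mul_mul_conjTranspose_same Z

theorem mul_inv_mul_transpose_mul_mul_self [Fintype m] [Fintype n] [DecidableEq n] [CommRing R]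
    {Q : Matrix m n R} (hQ : Qᵀ * Q = 1) {D : Matrix n n R} (hD : IsUnit D) :
    Q * D⁻¹ * Qᵀ * (Q * D * Qᵀ) * (Q * D * Qᵀ) = Q * D * Qᵀ := by
  have hDD : D⁻¹ * D = 1 := nonsing_inv_mul D ((isUnit_iff_isUnit_det D).mp hD)
  calc Q * D⁻¹ * Qᵀ * (Q * D * Qᵀ) * (Q * D * Qᵀ)
      = Q * (D⁻¹ * (Qᵀ * Q) * D) * (Qᵀ * Q) * D * Qᵀ := by simp only [Matrix.mul_assoc]
    _ = Q * D * Qᵀ := by simp only [hQ, hDD, Matrix.mul_one]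

end Congruence

section GramMatrix

variable {m n K : Type*} [Fintype m] [Fintype n] [DecidableEq n]
  [Field K] [LinearOrder K] [IsStrictOrderedRing K]

theorem isUnit_transpose_mul_self_iff_rank_eq_card {X : Matrix m n K} :
    IsUnit (Xᵀ * X) ↔ X.rank = Fintype.card n := by
  rw [← linearIndependent_cols_iff_isUnit, linearIndependent_iff_card_eq_finrank_span,
    Set.finrank, ← rank_eq_finrank_span_cols, rank_transpose_mul_self, eq_comm]

theorem isUnit_transpose_mul_self_of_isUnit_mul {Z : Matrix n m K} {X : Matrix m n K}
    (h : IsUnit (Z * X)) : IsUnit (Xᵀ * X) := by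
  refine isUnit_transpose_mul_self_iff_rank_eq_card.mpr (X.rank_le_card_width.antisymm ?_)
  exact (rank_of_isUnit _ h).ge.trans (rank_mul_le_right Z X)

end GramMatrix

section Step

variable {m n R : Type*} [Fintype m] [Fintype n] [DecidableEq n] [CommRing R]

/-- One step of ScaledGD from `X`, over any commutative ring. As in `scaledGD`, the inverse is the
junk value `0` when `Xᵀ * X` is singular. -/
noncomputable def scaledGDStep (A : Matrix m m R) (η : R) (X : Matrix m n R) : Matrix m n R :=
  X - η • ((X * Xᵀ - A) * X * (Xᵀ * X)⁻¹)

variable {A P : Matrix m m R} {X : Matrix m n R} {η : R}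

theorem transpose_mul_self_mul_inv (hG : IsUnit (Xᵀ * X)) : Xᵀ * (X * (Xᵀ * X)⁻¹) = 1 := by
  rw [← Matrix.mul_assoc, mul_nonsing_inv _ ((isUnit_iff_isUnit_det _).mp hG)]

theorem scaledGDStep_eq_add (hG : IsUnit (Xᵀ * X)) :
    scaledGDStep A η X = (1 - η) • X + η • (A * (X * (Xᵀ * X)⁻¹)) := by
  have hX : X * Xᵀ * (X * (Xᵀ * X)⁻¹) = X := by
    rw [Matrix.mul_assoc, transpose_mul_self_mul_inv hG, Matrix.mul_one]
  rw [scaledGDStep, Matrix.mul_assoc, Matrix.sub_mul, hX]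
  module

theorem mul_mul_scaledGDStep (hPA : P * A * A = A) (hPX : P * A * X = X) :
    P * A * scaledGDStep A η X = scaledGDStep A η X := by
  simp only [scaledGDStep, Matrix.mul_sub, Matrix.mul_smul, Matrix.sub_mul, ← Matrix.mul_assoc,
    hPA, hPX]

theorem transpose_mul_mul_scaledGDStep (hG : IsUnit (Xᵀ * X)) (hPX : P * A * X = X) :
    Xᵀ * P * scaledGDStep A η X = (1 - η) • (Xᵀ * P * X) + η • 1 := by
  have hcross : Xᵀ * P * (A * (X * (Xᵀ * X)⁻¹)) = 1 := by
    calc Xᵀ * P * (A * (X * (Xᵀ * X)⁻¹)) = Xᵀ * (P * A * X * (Xᵀ * X)⁻¹) := by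
          simp only [Matrix.mul_assoc]
      _ = 1 := by rw [hPX, transpose_mul_self_mul_inv hG]
  rw [scaledGDStep_eq_add hG, Matrix.mul_add, Matrix.mul_smul, Matrix.mul_smul, hcross]

theorem scaledGDStep_transpose_mul_mul_scaledGDStep (hP : P.IsSymm) (hG : IsUnit (Xᵀ * X))
    (hPX : P * A * X = X) :
    (scaledGDStep A η X)ᵀ * P * scaledGDStep A η X =
      (1 - η) ^ 2 • (Xᵀ * P * X) + (2 * η * (1 - η)) • 1 +
        η ^ 2 • ((X * (Xᵀ * X)⁻¹)ᵀ * A * (X * (Xᵀ * X)⁻¹)) := by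
  have hstep := scaledGDStep_eq_add (A := A) (η := η) hG
  have hXPY := transpose_mul_mul_scaledGDStep (η := η) hG hPX
  set Y := scaledGDStep A η X
  set W := X * (Xᵀ * X)⁻¹ with hW
  have hWX : Wᵀ * X = 1 := by
    rw [← transpose_inj, transpose_mul, transpose_transpose, transpose_one,
      transpose_mul_self_mul_inv hG]
  have hPAW : P * (A * W) = W := by rw [hW, ← Matrix.mul_assoc, ← Matrix.mul_assoc, hPX]
  have hAWP : (A * W)ᵀ * P = Wᵀ := by
    rw [← transpose_inj, transpose_mul, transpose_transpose, transpose_transpose, hP.eq, hPAW]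
  have hAWPY : (A * W)ᵀ * P * Y = (1 - η) • 1 + η • (Wᵀ * A * W) := by
    rw [hAWP, hstep, Matrix.mul_add, Matrix.mul_smul, Matrix.mul_smul, hWX, ← Matrix.mul_assoc]
  calc Yᵀ * P * Y = (1 - η) • (Xᵀ * P * Y) + η • ((A * W)ᵀ * P * Y) := by
        nth_rw 1 [hstep]
        simp only [transpose_add, transpose_smul, Matrix.add_mul, Matrix.smul_mul]
    _ = (1 - η) ^ 2 • (Xᵀ * P * X) + (2 * η * (1 - η)) • 1 + η ^ 2 • (Wᵀ * A * W) := by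
        rw [hXPY, hAWPY]
        module

end Step

section RealStep

variable {m n : Type*} [Fintype m] [Fintype n] [DecidableEq n]
  {A P : Matrix m m ℝ} {X : Matrix m n ℝ} {η : ℝ}

theorem isUnit_transpose_mul_self_scaledGDStep (hP : P.PosSemidef) (hη0 : 0 < η) (hη1 : η ≤ 1)
    (hG : IsUnit (Xᵀ * X)) (hPX : P * A * X = X) :
    IsUnit ((scaledGDStep A η X)ᵀ * scaledGDStep A η X) := by
  have hpos : (Xᵀ * P * scaledGDStep A η X).PosDef := by
    rw [transpose_mul_mul_scaledGDStep hG hPX]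
    exact (PosDef.one.smul hη0).posSemidef_add
      ((posSemidef_transpose_mul_mul_same hP X).smul (sub_nonneg.mpr hη1))
  exact isUnit_transpose_mul_self_of_isUnit_mul hpos.isUnit

open scoped MatrixOrder in
theorem le_scaledGDStep_transpose_mul_mul_scaledGDStep (hA : A.PosSemidef) (hP : P.IsHermitian)
    (hG : IsUnit (Xᵀ * X)) (hPX : P * A * X = X) :
    (1 - η) ^ 2 • (Xᵀ * P * X) + (2 * η * (1 - η)) • 1 ≤
      (scaledGDStep A η X)ᵀ * P * scaledGDStep A η X := by
  rw [scaledGDStep_transpose_mul_mul_scaledGDStep (isHermitian_iff_isSymm.mp hP) hG hPX]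
  exact le_add_of_nonneg_right
    ((posSemidef_transpose_mul_mul_same hA _).smul (sq_nonneg η)).nonneg

open scoped MatrixOrder in
theorem le_lamMin_scaledGDStep {r : ℕ} {X : Matrix m (Fin r) ℝ} (hr : 0 < r) (hA : A.PosSemidef)
    (hP : P.IsHermitian) (hG : IsUnit (Xᵀ * X)) (hPX : P * A * X = X) :
    (1 - η) ^ 2 * lamMin (Xᵀ * P * X) + 2 * η * (1 - η) ≤
      lamMin ((scaledGDStep A η X)ᵀ * P * scaledGDStep A η X) := by
  have hB : lamMin (Xᵀ * P * X) • 1 ≤ Xᵀ * P * X :=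
    (le_lamMin_iff hr (isHermitian_transpose_mul_mul_same hP X)).mp le_rfl
  rw [le_lamMin_iff hr (isHermitian_transpose_mul_mul_same hP _)]
  calc ((1 - η) ^ 2 * lamMin (Xᵀ * P * X) + 2 * η * (1 - η)) • (1 : Matrix (Fin r) (Fin r) ℝ)
      = (1 - η) ^ 2 • lamMin (Xᵀ * P * X) • 1 + (2 * η * (1 - η)) • 1 := by module
    _ ≤ (1 - η) ^ 2 • (Xᵀ * P * X) + (2 * η * (1 - η)) • 1 := by gcongr
    _ ≤ (scaledGDStep A η X)ᵀ * P * scaledGDStep A η X :=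
      le_scaledGDStep_transpose_mul_mul_scaledGDStep hA hP hG hPX

end RealStep

section Iterates

variable {m r : ℕ} {A P : Matrix (Fin m) (Fin m) ℝ} {X₀ : Matrix (Fin m) (Fin r) ℝ} {η : ℝ}

theorem scaledGD_succ (t : ℕ) :
    scaledGD A η X₀ (t + 1) = scaledGDStep A η (scaledGD A η X₀ t) :=
  rfl

theorem mul_mul_scaledGD (hPA : P * A * A = A) (hPX₀ : P * A * X₀ = X₀) (t : ℕ) :
    P * A * scaledGD A η X₀ t = scaledGD A η X₀ t := by
  induction t with
  | zero => exact hPX₀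
  | succ t ih =>
    rw [scaledGD_succ]
    exact mul_mul_scaledGDStep hPA ih

theorem isUnit_transpose_mul_self_scaledGD (hP : P.PosSemidef) (hPA : P * A * A = A)
    (hη0 : 0 < η) (hη1 : η ≤ 1) (hPX₀ : P * A * X₀ = X₀) (hG₀ : IsUnit (X₀ᵀ * X₀)) (t : ℕ) :
    IsUnit ((scaledGD A η X₀ t)ᵀ * scaledGD A η X₀ t) := by
  induction t with
  | zero => exact hG₀
  | succ t ih =>
    rw [scaledGD_succ]
    exact isUnit_transpose_mul_self_scaledGDStep hP hη0 hη1 ih (mul_mul_scaledGD hPA hPX₀ t)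

theorem le_lamMin_scaledGD (hr : 0 < r) (hA : A.PosSemidef) (hP : P.PosSemidef)
    (hPA : P * A * A = A) (hη0 : 0 < η) (hη1 : η ≤ 1) (hPX₀ : P * A * X₀ = X₀)
    (hG₀ : IsUnit (X₀ᵀ * X₀)) (t : ℕ) :
    (1 - η) - (1 - η) ^ (2 * t + 1) + (1 - η) ^ (2 * t) * lamMin (X₀ᵀ * P * X₀) ≤
      lamMin ((scaledGD A η X₀ t)ᵀ * P * scaledGD A η X₀ t) := by
  set b : ℕ → ℝ := fun s => lamMin ((scaledGD A η X₀ s)ᵀ * P * scaledGD A η X₀ s)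
  have hrec (s : ℕ) : (1 - η) ^ 2 * b s + 2 * η * (1 - η) ≤ b (s + 1) := by
    simp only [b, scaledGD_succ]
    exact le_lamMin_scaledGDStep hr hA hP.isHermitian
      (isUnit_transpose_mul_self_scaledGD hP hPA hη0 hη1 hPX₀ hG₀ s) (mul_mul_scaledGD hPA hPX₀ s)
  have hcontract (s : ℕ) : (1 - η) ^ 2 * (b s - (1 - η)) ≤ b (s + 1) - (1 - η) := by
    have hslack : 0 ≤ η ^ 2 * (1 - η) := mul_nonneg (sq_nonneg η) (sub_nonneg.mpr hη1)
    linear_combination hrec s + hslack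
  have hgeom : (1 - η) ^ (2 * t) * (b 0 - (1 - η)) ≤ b t - (1 - η) := by
    rw [pow_mul]
    exact geom_le (u := fun s => b s - (1 - η)) (sq_nonneg _) t fun s _ => hcontract s
  calc (1 - η) - (1 - η) ^ (2 * t + 1) + (1 - η) ^ (2 * t) * b 0
      = (1 - η) ^ (2 * t) * (b 0 - (1 - η)) + (1 - η) := by ring
    _ ≤ b t := by linarith

end Iterates

theorem stmt_7_general {m r : ℕ} (hr : 1 ≤ r) {A P : Matrix (Fin m) (Fin m) ℝ}
    (hA : A.PosSemidef) (hP : P.PosSemidef) (hPA : P * A * A = A) {η : ℝ} (hη0 : 0 < η)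
    (hη1 : η ≤ 1) {X₀ : Matrix (Fin m) (Fin r) ℝ} (hPX₀ : P * A * X₀ = X₀) (hrank : X₀.rank = r)
    (t : ℕ) :
    IsUnit ((scaledGD A η X₀ t)ᵀ * scaledGD A η X₀ t) ∧
      (1 - η) - (1 - η) ^ (2 * t + 3) + (1 - η) ^ (2 * t + 2) * lamMin (X₀ᵀ * P * X₀)
        ≤ lamMin ((scaledGD A η X₀ (t + 1))ᵀ * P * scaledGD A η X₀ (t + 1)) := by
  have hG₀ : IsUnit (X₀ᵀ * X₀) := by
    rw [isUnit_transpose_mul_self_iff_rank_eq_card, hrank, Fintype.card_fin]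
  exact ⟨isUnit_transpose_mul_self_scaledGD hP hPA hη0 hη1 hPX₀ hG₀ t,
    le_lamMin_scaledGD hr hA hP hPA hη0 hη1 hPX₀ hG₀ (t + 1)⟩

/-- Let `A = Q Σ Qᵀ` be a compact eigendecomposition of a positive semidefinite matrix of rank
`rA`, and let `X t` be the ScaledGD iterates from the Nyström initialization `X 0 = A Ω`, of full
rank `r`, where `1 ≤ r < rA`. Then all the matrices `(X t)ᵀ (X t)` that the iteration inverts are
invertible, and `B t = (X t)ᵀ A† (X t)` satisfies
`λ_min(B_{t+1}) ≥ (1 − η) − (1 − η)^{2t+3} + (1 − η)^{2t+2} λ_min(B_0)`. -/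
theorem stmt_7
    (m rA r : ℕ) (hr : 1 ≤ r) (hrrA : r < rA)
    (A : Matrix (Fin m) (Fin m) ℝ)
    (Q : Matrix (Fin m) (Fin rA) ℝ) (d : Fin rA → ℝ)
    (hQ : Qᵀ * Q = 1)
    (hd : ∀ i, 0 < d i)
    (hdanti : Antitone d)
    (hA : A = Q * Matrix.diagonal d * Qᵀ)
    (η : ℝ) (hη0 : 0 < η) (hη1 : η ≤ 1)
    (Ω : Matrix (Fin m) (Fin r) ℝ)
    (X : ℕ → Matrix (Fin m) (Fin r) ℝ)
    (hX : X = scaledGD A η (A * Ω))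
    (hrank : (X 0).rank = r)
    (Apinv : Matrix (Fin m) (Fin m) ℝ)
    (hApinv : Apinv = Q * (Matrix.diagonal d)⁻¹ * Qᵀ)
    (B : ℕ → Matrix (Fin r) (Fin r) ℝ)
    (hB : ∀ t : ℕ, B t = (X t)ᵀ * Apinv * X t) :
    ∀ t : ℕ,
      IsUnit ((X t)ᵀ * X t) ∧
      (1 - η) - (1 - η) ^ (2 * t + 3) + (1 - η) ^ (2 * t + 2) * lamMin (B 0)
        ≤ lamMin (B (t + 1)) := by
  have hD : (diagonal d).PosDef := PosDef.diagonal hd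
  have hPA := mul_inv_mul_transpose_mul_mul_self hQ hD.isUnit
  subst hX hA hApinv
  simp only [hB]
  exact stmt_7_general hr (posSemidef_mul_mul_transpose_same hD.posSemidef Q)
    (posSemidef_mul_mul_transpose_same hD.inv.posSemidef Q) hPA hη0 hη1
    (by rw [← Matrix.mul_assoc, hPA]) hrank
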